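/- Let g = 10. For b ranging over {2, 3, 4, 5, 6, 7, 8, 9, 11, 12} (i.e. 2 ≤ b ≤ 12, b ≠ 10), the total number of solutions (b, ε₁, ε₂, d₁, d₂, l, m, n) of the equations (b+ε₁)·b^n + ε₂ = d₁·(10^l−1)/9 + d₂·(10^m−1)/9, with ε₁, ε₂ ∈ {1, −1}, integers 1 ≤ d₁, d₂ ≤ 9, 1 ≤ l ≤ m and n ≥ 1, is exactly 163; in all of these solutions l ≤ 2, m ≤ 3 and n ≤ 8. One instance is (2−1)·2^8 − 1 = 3·(10²−1)/9 + 2·(10³−1)/9. -/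

import Mathlib

/-- Membership predicate: `(b, ε₁, ε₂, d₁, d₂, l, m, n)` is a solution of
`(b + ε₁)·b^n + ε₂ = d₁·(10^l−1)/9 + d₂·(10^m−1)/9` with `2 ≤ b ≤ 12`, `b ≠ 10`,
`ε₁, ε₂ ∈ {1, −1}`, `1 ≤ d₁, d₂ ≤ 9`, `1 ≤ l ≤ m` and `n ≥ 1`. -/
def SumSol10 (b ε₁ ε₂ d₁ d₂ : ℤ) (l m n : ℕ) : Prop :=
  2 ≤ b ∧ b ≤ 12 ∧ b ≠ 10 ∧
  (ε₁ = 1 ∨ ε₁ = -1) ∧ (ε₂ = 1 ∨ ε₂ = -1) ∧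
  1 ≤ d₁ ∧ d₁ ≤ 9 ∧ 1 ≤ d₂ ∧ d₂ ≤ 9 ∧
  1 ≤ l ∧ l ≤ m ∧ 1 ≤ n ∧
  (b + ε₁) * b ^ n + ε₂ = d₁ * (((10 : ℤ) ^ l - 1) / 9) + d₂ * (((10 : ℤ) ^ m - 1) / 9)

/-! ### Kernel-friendly bounded loops -/

/-- `p i` holds for all `i < n` (Boolean loop). -/
def loopAll (n : ℕ) (p : ℕ → Bool) : Bool :=
  Nat.rec true (fun k ih => and (p k) ih) n

/-- Evaluate `n` to a literal before passing it on. -/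
def force (n : ℕ) (f : ℕ → Bool) : Bool :=
  Nat.rec (f 0) (fun k _ => f (k + 1)) n

theorem loopAll_spec {n : ℕ} {p : ℕ → Bool} (h : loopAll n p = true) :
    ∀ i < n, p i = true := by
  induction n with
  | zero => intro i hi; omega
  | succ k ih =>
    have h' : and (p k) (loopAll k p) = true := h
    rw [Bool.and_eq_true] at h'
    intro i hi
    rcases Nat.lt_succ_iff_lt_or_eq.mp hi with hlt | heq
    · exact ih h'.2 i hlt
    · exact heq ▸ h'.1

theorem force_eq (n : ℕ) (f : ℕ → Bool) : force n f = f n := by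
  cases n <;> rfl

/-- Inner test: no solution modulo some member `(N, q)` of the list. Here the lower exponent
runs over `i0 ≤ i < i0 + qi q`. -/
def killed (L : List (ℕ × ℕ)) (v d₁ d₂ i0 : ℕ) (full : Bool) : Bool :=
  L.any fun Nq => loopAll (bif full then Nq.2 else 1) fun i => loopAll Nq.2 fun j =>
    !(Nat.beq (v % Nq.1) ((d₁ * 10 ^ (i0 + i) + d₂ * 10 ^ j + 9) % Nq.1))

/-- One sieve step, with `v = c * b ^ n + k + d₁`, `x` the known part of the right side mod `M`. -/
def step (M : ℕ) (L : List (ℕ × ℕ)) (v x d₁ i0 : ℕ) (full : Bool) : Bool :=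
  force ((x + 9 + (M - v % M)) % M) fun d₂ =>
    or (or (Nat.beq d₂ 0) (Nat.ble 10 d₂)) (killed L (v + d₂) d₁ d₂ i0 full)

/-- The full sieve for base `b`. -/
def sieve (b MA MB P : ℕ) (L : List (ℕ × ℕ)) : Bool :=
  loopAll 2 fun e => loopAll P fun r => force ((9 * (b + 2 * e) - 9) * b ^ (17 + r)) fun t =>
    loopAll 2 fun f => loopAll 9 fun d => force (t + 18 * f + (d + 1)) fun v =>
      and (step MA L v 0 (d + 1) 0 true)
        (loopAll 4 fun l => step MB L v ((d + 1) * 10 ^ (l + 1)) (d + 1) (l + 1) false)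

/-- Side conditions on the parameters. -/
def params (b MA MB P : ℕ) (L : List (ℕ × ℕ)) : Bool :=
  Nat.ble 10 MA && Nat.ble 10 MB && Nat.ble 1 P &&
  Nat.beq (10 ^ 5 % MA) 0 && Nat.beq (10 ^ 18 % MB) 0 &&
  Nat.beq (b ^ (17 + P) % MA) (b ^ 17 % MA) && Nat.beq (b ^ (17 + P) % MB) (b ^ 17 % MB) &&
  L.all fun Nq => Nat.ble 1 Nq.2 && Nat.beq (10 ^ Nq.2 % Nq.1) (1 % Nq.1) &&
    Nat.beq (b ^ (17 + P) % Nq.1) (b ^ 17 % Nq.1)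

theorem pow_period {b N P : ℕ} (h : b ^ (17 + P) ≡ b ^ 17 [MOD N]) (n : ℕ) (hn : 17 ≤ n) :
    b ^ n ≡ b ^ (17 + (n - 17) % P) [MOD N] := by
  have key : ∀ q r : ℕ, b ^ (17 + r + P * q) ≡ b ^ (17 + r) [MOD N] := by
    intro q r
    induction q with
    | zero => simp; rfl
    | succ q ih =>
      have : b ^ (17 + r + P * (q + 1)) = b ^ (17 + P) * b ^ (r + P * q) := by
        rw [← pow_add]; congr 1; ring
      rw [this]
      refine (h.mul_right _).trans ?_
      rw [← pow_add, ← add_assoc]; exact ih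
  have h2 := key ((n - 17) / P) ((n - 17) % P)
  have h3 := Nat.mod_add_div (n - 17) P
  rwa [show 17 + (n - 17) % P + P * ((n - 17) / P) = n by omega] at h2

theorem ten_period {N q : ℕ} (h : 10 ^ q ≡ 1 [MOD N]) (m : ℕ) :
    10 ^ m ≡ 10 ^ (m % q) [MOD N] := by
  conv_lhs => rw [← Nat.mod_add_div m q, pow_add, pow_mul]
  simpa using (h.pow (m / q)).mul_left (10 ^ (m % q))

theorem step_spec {M : ℕ} {L : List (ℕ × ℕ)} {v x d₁ i0 : ℕ} {full : Bool}
    (h : step M L v x d₁ i0 full = true) (hM : 10 ≤ M) {d₂ : ℕ} (h1 : 1 ≤ d₂) (h9 : d₂ ≤ 9)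
    (hv : v + d₂ ≡ x + 9 [MOD M]) : killed L (v + d₂) d₁ d₂ i0 full = true := by
  have e : (x + 9 + (M - v % M)) % M = d₂ := by
    have hlt : v % M < M := Nat.mod_lt _ (by omega)
    have h3 : d₂ + v ≡ (x + 9 + (M - v % M)) + v [MOD M] := by
      have h4 : (x + 9) + M ≡ (x + 9 + (M - v % M)) + v [MOD M] := by
        have : (x + 9) + M = (x + 9 + (M - v % M)) + v % M := by omega
        rw [this]
        exact (Nat.mod_modEq v M).add_left _
      have h5 : x + 9 ≡ (x + 9) + M [MOD M] := by simp [Nat.ModEq]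
      rw [add_comm]
      exact hv.trans (h5.trans h4)
    have h6 : d₂ ≡ _ [MOD M] := Nat.ModEq.add_right_cancel' v h3
    rw [← h6, Nat.mod_eq_of_lt (by omega)]
  unfold step at h
  rw [force_eq, e] at h
  simp only [Bool.or_eq_true, Nat.beq_eq, Nat.ble_eq] at h
  rcases h with (h | h) | h
  · omega
  · omega
  · exact h

theorem killed_spec {L : List (ℕ × ℕ)} {v d₁ d₂ i0 : ℕ} {full : Bool}
    (h : killed L v d₁ d₂ i0 full = true) : ∃ Nq ∈ L, ∀ i < (bif full then Nq.2 else 1),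
      ∀ j < Nq.2, ¬ (v ≡ d₁ * 10 ^ (i0 + i) + d₂ * 10 ^ j + 9 [MOD Nq.1]) := by
  unfold killed at h
  rw [List.any_eq_true] at h
  obtain ⟨Nq, hm, h⟩ := h
  refine ⟨Nq, hm, fun i hi j hj hc => ?_⟩
  have h2 := loopAll_spec (loopAll_spec h i hi) j hj
  rw [Bool.not_eq_true', ← Bool.not_eq_true, Nat.beq_eq] at h2
  exact h2 hc

/-- The sieve shows that large solutions do not exist. -/
theorem sieve_sound {b MA MB P : ℕ} {L : List (ℕ × ℕ)} (hp : params b MA MB P L = true)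
    (hs : sieve b MA MB P L = true) {e f d₁ d₂ l m n : ℕ} (he : e < 2) (hf : f < 2)
    (h1 : 1 ≤ d₁) (h1' : d₁ ≤ 9) (h2 : 1 ≤ d₂) (h2' : d₂ ≤ 9) (hl : 1 ≤ l) (hlm : l ≤ m)
    (heq : (9 * (b + 2 * e) - 9) * b ^ n + 18 * f + d₁ + d₂ = d₁ * 10 ^ l + d₂ * 10 ^ m + 9) :
    n < 17 ∨ m < 18 := by
  by_contra hcon
  push Not at hcon
  obtain ⟨hn, hm⟩ := hcon
  unfold params at hp
  simp only [Bool.and_eq_true, Nat.ble_eq, Nat.beq_eq, List.all_eq_true] at hp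
  obtain ⟨⟨⟨⟨⟨⟨⟨hA, hB⟩, hP⟩, hA5⟩, hB18⟩, hbA⟩, hbB⟩, hL⟩ := hp
  obtain ⟨d, rfl⟩ : ∃ d, d₁ = d + 1 := ⟨d₁ - 1, by omega⟩
  set c := 9 * (b + 2 * e) - 9 with hc
  set r := (n - 17) % P with hr
  have hrP : r < P := Nat.mod_lt _ (by omega)
  have hs1 := loopAll_spec (loopAll_spec hs e he) r hrP
  rw [force_eq] at hs1
  have hs2 := loopAll_spec (loopAll_spec hs1 f hf) d (by omega)
  rw [force_eq, Bool.and_eq_true] at hs2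
  rw [← hc] at hs2
  set v := c * b ^ (17 + r) + 18 * f + (d + 1) with hv
  have hvN : ∀ N, b ^ (17 + P) ≡ b ^ 17 [MOD N] →
      v + d₂ ≡ (d + 1) * 10 ^ l + d₂ * 10 ^ m + 9 [MOD N] := by
    intro N hN
    rw [← heq]
    exact ((((pow_period hN n hn).mul_left c).add_right _).add_right _).add_right _ |>.symm
  have z : ∀ {M a t : ℕ}, 10 ^ a % M = 0 → a ≤ t → 10 ^ t ≡ 0 [MOD M] := by
    intro M a t h hat
    exact (Nat.modEq_zero_iff_dvd).mpr ((Nat.dvd_of_mod_eq_zero h).trans (pow_dvd_pow 10 hat))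
  by_cases hl5 : 5 ≤ l
  · have hx : v + d₂ ≡ 0 + 9 [MOD MA] := by
      refine (hvN MA hbA).trans ?_
      have := ((z hA5 hl5).mul_left (d + 1)).add ((z hA5 (hl5.trans hlm)).mul_left d₂)
      simpa using this.add_right 9
    obtain ⟨Nq, hmem, hk⟩ := killed_spec (step_spec hs2.1 hA h2 h2' hx)
    obtain ⟨⟨hq1, hq2⟩, hq3⟩ := hL Nq hmem
    refine hk (l % Nq.2) (Nat.mod_lt _ hq1) (m % Nq.2) (Nat.mod_lt _ hq1) ?_
    refine (hvN Nq.1 hq3).trans ?_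
    rw [zero_add]
    exact (((ten_period hq2 l).mul_left _).add ((ten_period hq2 m).mul_left _)).add_right 9
  · obtain ⟨l', rfl⟩ : ∃ l', l = l' + 1 := ⟨l - 1, by omega⟩
    have hx : v + d₂ ≡ (d + 1) * 10 ^ (l' + 1) + 9 [MOD MB] := by
      refine (hvN MB hbB).trans ?_
      have := ((z hB18 hm).mul_left d₂).add_left ((d + 1) * 10 ^ (l' + 1))
      simpa using this.add_right 9
    obtain ⟨Nq, hmem, hk⟩ := killed_spec
      (step_spec (loopAll_spec hs2.2 l' (by omega)) hB h2 h2' hx)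
    obtain ⟨⟨hq1, hq2⟩, hq3⟩ := hL Nq hmem
    refine hk 0 (by simp) (m % Nq.2) (Nat.mod_lt _ hq1) ?_
    refine (hvN Nq.1 hq3).trans ?_
    rw [add_zero]
    exact (((ten_period hq2 m).mul_left _).add_left _).add_right 9

/-! ### The finite box -/

/-- The complete list of solutions. -/
def solList : List (ℤ × ℤ × ℤ × ℤ × ℤ × ℕ × ℕ × ℕ) :=
  [(2, 1, 1, 1, 6, 1, 1, 1), (2, 1, 1, 2, 5, 1, 1, 1), (2, 1, 1, 3, 4, 1, 1, 1),
   (2, 1, 1, 4, 3, 1, 1, 1), (2, 1, 1, 5, 2, 1, 1, 1), (2, 1, 1, 6, 1, 1, 1, 1),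
   (2, 1, 1, 4, 9, 1, 1, 2), (2, 1, 1, 5, 8, 1, 1, 2), (2, 1, 1, 6, 7, 1, 1, 2),
   (2, 1, 1, 7, 6, 1, 1, 2), (2, 1, 1, 8, 5, 1, 1, 2), (2, 1, 1, 9, 4, 1, 1, 2),
   (2, 1, 1, 2, 1, 1, 2, 2), (2, 1, 1, 3, 2, 1, 2, 3), (2, 1, 1, 5, 4, 1, 2, 4),
   (2, 1, 1, 9, 8, 1, 2, 5), (2, 1, -1, 1, 4, 1, 1, 1), (2, 1, -1, 2, 3, 1, 1, 1),
   (2, 1, -1, 3, 2, 1, 1, 1), (2, 1, -1, 4, 1, 1, 1, 1), (2, 1, -1, 2, 9, 1, 1, 2),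
   (2, 1, -1, 3, 8, 1, 1, 2), (2, 1, -1, 4, 7, 1, 1, 2), (2, 1, -1, 5, 6, 1, 1, 2),
   (2, 1, -1, 6, 5, 1, 1, 2), (2, 1, -1, 7, 4, 1, 1, 2), (2, 1, -1, 8, 3, 1, 1, 2),
   (2, 1, -1, 9, 2, 1, 1, 2), (2, 1, -1, 1, 2, 1, 2, 3), (2, 1, -1, 3, 4, 1, 2, 4),
   (2, 1, -1, 7, 8, 1, 2, 5), (2, -1, 1, 1, 2, 1, 1, 1), (2, -1, 1, 2, 1, 1, 1, 1),
   (2, -1, 1, 1, 4, 1, 1, 2), (2, -1, 1, 2, 3, 1, 1, 2), (2, -1, 1, 3, 2, 1, 1, 2),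
   (2, -1, 1, 4, 1, 1, 1, 2), (2, -1, 1, 1, 8, 1, 1, 3), (2, -1, 1, 2, 7, 1, 1, 3),
   (2, -1, 1, 3, 6, 1, 1, 3), (2, -1, 1, 4, 5, 1, 1, 3), (2, -1, 1, 5, 4, 1, 1, 3),
   (2, -1, 1, 6, 3, 1, 1, 3), (2, -1, 1, 7, 2, 1, 1, 3), (2, -1, 1, 8, 1, 1, 1, 3),
   (2, -1, 1, 8, 9, 1, 1, 4), (2, -1, 1, 9, 8, 1, 1, 4), (2, -1, 1, 6, 1, 1, 2, 4),
   (2, -1, 1, 1, 2, 2, 2, 5), (2, -1, 1, 2, 1, 2, 2, 5), (2, -1, -1, 1, 2, 1, 1, 2),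
   (2, -1, -1, 2, 1, 1, 1, 2), (2, -1, -1, 1, 6, 1, 1, 3), (2, -1, -1, 2, 5, 1, 1, 3),
   (2, -1, -1, 3, 4, 1, 1, 3), (2, -1, -1, 4, 3, 1, 1, 3), (2, -1, -1, 5, 2, 1, 1, 3),
   (2, -1, -1, 6, 1, 1, 1, 3), (2, -1, -1, 6, 9, 1, 1, 4), (2, -1, -1, 7, 8, 1, 1, 4),
   (2, -1, -1, 8, 7, 1, 1, 4), (2, -1, -1, 9, 6, 1, 1, 4), (2, -1, -1, 4, 1, 1, 2, 4),
   (2, -1, -1, 9, 2, 1, 2, 5), (2, -1, -1, 8, 5, 1, 2, 6), (2, -1, -1, 3, 2, 2, 3, 8),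
   (3, 1, 1, 4, 9, 1, 1, 1), (3, 1, 1, 5, 8, 1, 1, 1), (3, 1, 1, 6, 7, 1, 1, 1),
   (3, 1, 1, 7, 6, 1, 1, 1), (3, 1, 1, 8, 5, 1, 1, 1), (3, 1, 1, 9, 4, 1, 1, 1),
   (3, 1, 1, 2, 1, 1, 2, 1), (3, 1, 1, 4, 3, 1, 2, 2), (3, 1, -1, 2, 9, 1, 1, 1),
   (3, 1, -1, 3, 8, 1, 1, 1), (3, 1, -1, 4, 7, 1, 1, 1), (3, 1, -1, 5, 6, 1, 1, 1),
   (3, 1, -1, 6, 5, 1, 1, 1), (3, 1, -1, 7, 4, 1, 1, 1), (3, 1, -1, 8, 3, 1, 1, 1),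
   (3, 1, -1, 9, 2, 1, 1, 1), (3, 1, -1, 2, 3, 1, 2, 2), (3, 1, -1, 8, 9, 1, 2, 3),
   (3, -1, 1, 1, 6, 1, 1, 1), (3, -1, 1, 2, 5, 1, 1, 1), (3, -1, 1, 3, 4, 1, 1, 1),
   (3, -1, 1, 4, 3, 1, 1, 1), (3, -1, 1, 5, 2, 1, 1, 1), (3, -1, 1, 6, 1, 1, 1, 1),
   (3, -1, 1, 8, 1, 1, 2, 2), (3, -1, 1, 1, 4, 2, 2, 3), (3, -1, 1, 2, 3, 2, 2, 3),
   (3, -1, 1, 3, 2, 2, 2, 3), (3, -1, 1, 4, 1, 2, 2, 3), (3, -1, -1, 1, 4, 1, 1, 1),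
   (3, -1, -1, 2, 3, 1, 1, 1), (3, -1, -1, 3, 2, 1, 1, 1), (3, -1, -1, 4, 1, 1, 1, 1),
   (3, -1, -1, 8, 9, 1, 1, 2), (3, -1, -1, 9, 8, 1, 1, 2), (3, -1, -1, 6, 1, 1, 2, 2),
   (3, -1, -1, 9, 4, 1, 2, 3), (4, 1, 1, 4, 7, 1, 2, 2), (4, 1, 1, 9, 2, 2, 3, 3),
   (4, 1, -1, 8, 1, 1, 2, 1), (4, 1, -1, 2, 7, 1, 2, 2), (4, -1, 1, 4, 9, 1, 1, 1),
   (4, -1, 1, 5, 8, 1, 1, 1), (4, -1, 1, 6, 7, 1, 1, 1), (4, -1, 1, 7, 6, 1, 1, 1),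
   (4, -1, 1, 8, 5, 1, 1, 1), (4, -1, 1, 9, 4, 1, 1, 1), (4, -1, 1, 2, 1, 1, 2, 1),
   (4, -1, 1, 5, 4, 1, 2, 2), (4, -1, -1, 2, 9, 1, 1, 1), (4, -1, -1, 3, 8, 1, 1, 1),
   (4, -1, -1, 4, 7, 1, 1, 1), (4, -1, -1, 5, 6, 1, 1, 1), (4, -1, -1, 6, 5, 1, 1, 1),
   (4, -1, -1, 7, 4, 1, 1, 1), (4, -1, -1, 8, 3, 1, 1, 1), (4, -1, -1, 9, 2, 1, 1, 1),
   (4, -1, -1, 3, 4, 1, 2, 2), (5, 1, 1, 9, 2, 1, 2, 1), (5, 1, -1, 7, 2, 1, 2, 1),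
   (5, -1, 1, 2, 9, 1, 2, 2), (5, -1, -1, 8, 1, 1, 2, 1), (5, -1, -1, 1, 8, 2, 2, 2),
   (5, -1, -1, 2, 7, 2, 2, 2), (5, -1, -1, 3, 6, 2, 2, 2), (5, -1, -1, 4, 5, 2, 2, 2),
   (5, -1, -1, 5, 4, 2, 2, 2), (5, -1, -1, 6, 3, 2, 2, 2), (5, -1, -1, 7, 2, 2, 2, 2),
   (5, -1, -1, 8, 1, 2, 2, 2), (5, -1, -1, 5, 4, 2, 3, 3), (6, 1, -1, 8, 3, 1, 2, 1),
   (6, -1, 1, 9, 2, 1, 2, 1), (6, -1, -1, 7, 2, 1, 2, 1), (7, 1, 1, 2, 5, 1, 2, 1),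
   (7, 1, -1, 1, 4, 2, 2, 1), (7, 1, -1, 2, 3, 2, 2, 1), (7, 1, -1, 3, 2, 2, 2, 1),
   (7, 1, -1, 4, 1, 2, 2, 1), (7, -1, -1, 8, 3, 1, 2, 1), (8, 1, 1, 7, 6, 1, 2, 1),
   (8, 1, 1, 2, 5, 2, 3, 2), (8, 1, -1, 5, 6, 1, 2, 1), (8, -1, 1, 2, 5, 1, 2, 1),
   (8, -1, 1, 5, 4, 1, 3, 2), (8, -1, -1, 1, 4, 2, 2, 1), (8, -1, -1, 2, 3, 2, 2, 1),
   (8, -1, -1, 3, 2, 2, 2, 1), (8, -1, -1, 4, 1, 2, 2, 1), (8, -1, -1, 3, 4, 1, 3, 2),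
   (9, 1, 1, 3, 8, 1, 2, 1), (9, 1, -1, 1, 8, 1, 2, 1), (9, -1, 1, 7, 6, 1, 2, 1),
   (9, -1, -1, 5, 6, 1, 2, 1), (11, 1, 1, 2, 1, 2, 3, 1), (12, 1, -1, 4, 1, 2, 3, 1),
   (12, -1, 1, 2, 1, 2, 3, 1)]

/-- Every solution in base `b` with `n < 64` and `m < 22` is listed. -/
def box (b : ℕ) : Bool :=
  loopAll 2 fun e => loopAll 64 fun n => loopAll 2 fun f =>
    force ((9 * (b + 2 * e) - 9) * b ^ n + 18 * f - 9) fun u =>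
    or (Nat.beq n 0) (loopAll 22 fun m => force (10 ^ m - 1) fun rm =>
      or (or (Nat.beq m 0) (or (Nat.blt u rm) (Nat.blt (18 * rm) u)))
        (loopAll 9 fun d => or (Nat.blt u ((d + 1) * rm))
          (force (u - (d + 1) * rm) fun w => or (Nat.blt (9 * rm) w)
            (loopAll (m + 1) fun l => or (Nat.beq l 0) (force (10 ^ l - 1) fun rl =>
              or (!(Nat.beq (w % rl) 0)) (force (w / rl) fun d₁ =>
                or (or (Nat.beq d₁ 0) (Nat.ble 10 d₁))
                  (decide (((b : ℤ), 2 * (e : ℤ) - 1, 2 * (f : ℤ) - 1, (d₁ : ℤ), ((d + 1 : ℕ) : ℤ),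
                    l, m, n) ∈ solList))))))))

theorem box_spec {b : ℕ} (h : box b = true) {e f d₁ d₂ l m n : ℕ} (he : e < 2) (hf : f < 2)
    (h1 : 1 ≤ d₁) (h1' : d₁ ≤ 9) (h2 : 1 ≤ d₂) (h2' : d₂ ≤ 9) (hl : 1 ≤ l) (hlm : l ≤ m)
    (hn : 1 ≤ n) (hn' : n < 64) (hm' : m < 22)
    (heq : (9 * (b + 2 * e) - 9) * b ^ n + 18 * f + d₁ + d₂ = d₁ * 10 ^ l + d₂ * 10 ^ m + 9) :
    ((b : ℤ), 2 * (e : ℤ) - 1, 2 * (f : ℤ) - 1, (d₁ : ℤ), (d₂ : ℤ), l, m, n) ∈ solList := by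
  obtain ⟨d, rfl⟩ : ∃ d, d₂ = d + 1 := ⟨d₂ - 1, by omega⟩
  have g1 := loopAll_spec (loopAll_spec (loopAll_spec h e he) n hn') f hf
  rw [force_eq] at g1
  obtain ⟨rl, hrl⟩ : ∃ rl, 10 ^ l = rl + 1 := ⟨10 ^ l - 1, by have := Nat.one_le_pow l 10 (by omega); omega⟩
  obtain ⟨rm, hrm⟩ : ∃ rm, 10 ^ m = rm + 1 := ⟨10 ^ m - 1, by have := Nat.one_le_pow m 10 (by omega); omega⟩
  have hle : rl ≤ rm := by
    have := Nat.pow_le_pow_right (show 0 < 10 by omega) hlm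
    omega
  have hrl9 : 9 ≤ rl := by
    have := Nat.pow_le_pow_right (show 0 < 10 by omega) hl
    omega
  have hu : (9 * (b + 2 * e) - 9) * b ^ n + 18 * f - 9 = d₁ * rl + (d + 1) * rm := by
    rw [hrl, hrm] at heq
    have : d₁ * (rl + 1) + (d + 1) * (rm + 1) + 9 = d₁ * rl + (d + 1) * rm + d₁ + (d + 1) + 9 := by ring
    omega
  rw [hu] at g1
  have hd1 : d₁ * rl ≤ 9 * rm := Nat.mul_le_mul h1' hle
  have hd2 : (d + 1) * rm ≤ 9 * rm := Nat.mul_le_mul h2' le_rfl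
  have hd3 : 1 * rm ≤ (d + 1) * rm := Nat.mul_le_mul h2 le_rfl
  have nb : ∀ {p q : Bool}, or p q = true → p = false → q = true := by
    intro p q h1 h2; rw [h2] at h1; exact h1
  have blt : ∀ {x y : ℕ}, y ≤ x → Nat.blt x y = false := by
    intro x y hxy
    rw [← Bool.not_eq_true, Nat.blt_eq]; omega
  have beq : ∀ {x y : ℕ}, x ≠ y → Nat.beq x y = false := by
    intro x y hxy
    rw [← Bool.not_eq_true, Nat.beq_eq]; exact hxy
  have g2 := loopAll_spec (nb g1 (beq (by omega))) m hm'
  rw [force_eq, show 10 ^ m - 1 = rm by omega] at g2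
  have g3 := nb g2 (by rw [beq (by omega), blt (by omega), blt (by omega)]; rfl)
  have g4 := nb (loopAll_spec g3 d (by omega)) (blt (by omega))
  rw [force_eq, Nat.add_sub_cancel] at g4
  have g5 := nb (loopAll_spec (nb g4 (blt hd1)) l (by omega)) (beq (by omega))
  rw [force_eq, show 10 ^ l - 1 = rl by omega] at g5
  have g6 := nb g5 (by simp)
  rw [force_eq, Nat.mul_div_cancel _ (by omega)] at g6
  have g7 := nb g6 (by
    rw [beq (by omega), Bool.false_or, ← Bool.not_eq_true, Nat.ble_eq]; omega)
  exact of_decide_eq_true g7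

theorem sieve_evens : ∀ b ∈ [2, 4, 6, 8, 12],
    params b 800 3276800 20 [] = true ∧ sieve b 800 3276800 20 [] = true := by
  decide +kernel

theorem sieve_five : params 5 4000 12500000 8 [] = true ∧ sieve 5 4000 12500000 8 [] = true := by
  decide +kernel

theorem sieve_odds : ∀ b ∈ [3, 7, 9],
    params b 2000 2000 100 [(1111, 4)] = true ∧ sieve b 2000 2000 100 [(1111, 4)] = true := by
  decide +kernel

theorem sieve_eleven : params 11 2000 2000 300 [(1111, 4), (1001, 6)] = true ∧
    sieve 11 2000 2000 300 [(1111, 4), (1001, 6)] = true := by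
  decide +kernel

theorem box_all : ∀ b ∈ [2, 3, 4, 5, 6, 7, 8, 9, 11, 12], box b = true := by
  decide +kernel

/-- All solutions are in the list. -/
theorem nat_complete {b e f d₁ d₂ l m n : ℕ} (hb : 2 ≤ b) (hb' : b ≤ 12) (hb10 : b ≠ 10)
    (he : e < 2) (hf : f < 2)
    (h1 : 1 ≤ d₁) (h1' : d₁ ≤ 9) (h2 : 1 ≤ d₂) (h2' : d₂ ≤ 9) (hl : 1 ≤ l) (hlm : l ≤ m)
    (hn : 1 ≤ n)
    (heq : (9 * (b + 2 * e) - 9) * b ^ n + 18 * f + d₁ + d₂ = d₁ * 10 ^ l + d₂ * 10 ^ m + 9) :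
    ((b : ℤ), 2 * (e : ℤ) - 1, 2 * (f : ℤ) - 1, (d₁ : ℤ), (d₂ : ℤ), l, m, n) ∈ solList := by
  have hbox : box b = true := by
    apply box_all
    simp only [List.mem_cons, List.not_mem_nil, or_false]
    omega
  have hor : n < 17 ∨ m < 18 := by
    have hcase : b ∈ [2, 4, 6, 8, 12] ∨ b = 5 ∨ b ∈ [3, 7, 9] ∨ b = 11 := by
      simp only [List.mem_cons, List.not_mem_nil, or_false]
      omega
    rcases hcase with h | h | h | h
    · exact sieve_sound (sieve_evens b h).1 (sieve_evens b h).2 he hf h1 h1' h2 h2' hl hlm heq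
    · subst h
      exact sieve_sound sieve_five.1 sieve_five.2 he hf h1 h1' h2 h2' hl hlm heq
    · exact sieve_sound (sieve_odds b h).1 (sieve_odds b h).2 he hf h1 h1' h2 h2' hl hlm heq
    · subst h
      exact sieve_sound sieve_eleven.1 sieve_eleven.2 he hf h1 h1' h2 h2' hl hlm heq
  have hm1 : 1 * 10 ^ m ≤ d₂ * 10 ^ m := Nat.mul_le_mul h2 le_rfl
  have hl1 : 1 * 10 ^ l ≤ d₁ * 10 ^ l := Nat.mul_le_mul h1 le_rfl
  have hc1 : 1 * b ^ n ≤ (9 * (b + 2 * e) - 9) * b ^ n := Nat.mul_le_mul (by omega) le_rfl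
  have hc2 : (9 * (b + 2 * e) - 9) * b ^ n ≤ 117 * b ^ n := Nat.mul_le_mul (by omega) le_rfl
  have hbn1 : b ^ n ≤ 12 ^ n := Nat.pow_le_pow_left hb' n
  have hbn2 : 2 ^ n ≤ b ^ n := Nat.pow_le_pow_left hb n
  have hlm' : 10 ^ l ≤ 10 ^ m := Nat.pow_le_pow_right (by omega) hlm
  have hd1 : d₁ * 10 ^ l ≤ 9 * 10 ^ m := Nat.mul_le_mul h1' hlm'
  have hd2 : d₂ * 10 ^ m ≤ 9 * 10 ^ m := Nat.mul_le_mul h2' le_rfl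
  have hm' : m < 22 := by
    rcases hor with h | h
    · by_contra hc
      have a1 : 12 ^ n ≤ 12 ^ 16 := Nat.pow_le_pow_right (by omega) (by omega)
      have a2 : 10 ^ 22 ≤ 10 ^ m := Nat.pow_le_pow_right (by omega) (by omega)
      norm_num at a1 a2
      omega
    · omega
  have hn' : n < 64 := by
    rcases hor with h | h
    · omega
    · by_contra hc
      have a1 : 2 ^ 64 ≤ 2 ^ n := Nat.pow_le_pow_right (by omega) (by omega)
      have a2 : 10 ^ m ≤ 10 ^ 17 := Nat.pow_le_pow_right (by omega) (by omega)
      norm_num at a1 a2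
      omega
  exact box_spec hbox he hf h1 h1' h2 h2' hl hlm hn hn' hm' heq

theorem nine_mul_rep (l : ℕ) : 9 * (((10 : ℤ) ^ l - 1) / 9) = (10 : ℤ) ^ l - 1 := by
  apply Int.mul_ediv_cancel'
  simpa using sub_dvd_pow_sub_pow (10 : ℤ) 1 l

theorem complete {b ε₁ ε₂ d₁ d₂ : ℤ} {l m n : ℕ} (h : SumSol10 b ε₁ ε₂ d₁ d₂ l m n) :
    (b, ε₁, ε₂, d₁, d₂, l, m, n) ∈ solList := by
  obtain ⟨hb, hb', hb10, he, hf, h1, h1', h2, h2', hl, hlm, hn, heq⟩ := h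
  lift b to ℕ using by omega
  lift d₁ to ℕ using by omega
  lift d₂ to ℕ using by omega
  obtain ⟨e, he2, rfl⟩ : ∃ e : ℕ, e < 2 ∧ ε₁ = 2 * (e : ℤ) - 1 := by
    rcases he with rfl | rfl
    · exact ⟨1, by norm_num, by norm_num⟩
    · exact ⟨0, by norm_num, by norm_num⟩
  obtain ⟨f, hf2, rfl⟩ : ∃ f : ℕ, f < 2 ∧ ε₂ = 2 * (f : ℤ) - 1 := by
    rcases hf with rfl | rfl
    · exact ⟨1, by norm_num, by norm_num⟩
    · exact ⟨0, by norm_num, by norm_num⟩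
  refine nat_complete (by omega) (by omega) (by omega) he2 hf2 (by omega) (by omega) (by omega)
    (by omega) hl hlm hn ?_
  have hl9 := nine_mul_rep l
  have hm9 := nine_mul_rep m
  zify [show 9 ≤ 9 * (b + 2 * e) by omega]
  linear_combination 9 * heq + (d₁ : ℤ) * hl9 + (d₂ : ℤ) * hm9

/-- Every listed tuple is a solution. -/
theorem sound : ∀ x ∈ solList, SumSol10 x.1 x.2.1 x.2.2.1 x.2.2.2.1 x.2.2.2.2.1
    x.2.2.2.2.2.1 x.2.2.2.2.2.2.1 x.2.2.2.2.2.2.2 := by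
  unfold SumSol10
  decide +kernel

theorem sol_bounds : ∀ x ∈ solList,
    x.2.2.2.2.2.1 ≤ 2 ∧ x.2.2.2.2.2.2.1 ≤ 3 ∧ x.2.2.2.2.2.2.2 ≤ 8 := by
  decide +kernel

set_option synthInstance.maxSize 1000 in
set_option synthInstance.maxHeartbeats 400000 in
theorem sol_nodup : solList.Nodup := by
  decide +kernel

theorem sol_length : solList.length = 163 := by
  decide +kernel

/-- For `g = 10` and `2 ≤ b ≤ 12`, `b ≠ 10`: the equations
`(b ± 1)·b^n ± 1 = d₁·(10^l−1)/9 + d₂·(10^m−1)/9` have exactly `163` solutions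
with `n ≥ 1`; in all of them `l ≤ 2`, `m ≤ 3` and `n ≤ 8`. One instance is
`(2−1)·2^8 − 1 = 3·(10²−1)/9 + 2·(10³−1)/9`. -/
theorem stmt_17 :
    {x : ℤ × ℤ × ℤ × ℤ × ℤ × ℕ × ℕ × ℕ |
        SumSol10 x.1 x.2.1 x.2.2.1 x.2.2.2.1 x.2.2.2.2.1
          x.2.2.2.2.2.1 x.2.2.2.2.2.2.1 x.2.2.2.2.2.2.2}.ncard = 163 ∧
    (∀ (b ε₁ ε₂ d₁ d₂ : ℤ) (l m n : ℕ),
      SumSol10 b ε₁ ε₂ d₁ d₂ l m n → l ≤ 2 ∧ m ≤ 3 ∧ n ≤ 8) ∧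
    ((2 : ℤ) - 1) * 2 ^ 8 - 1 =
      3 * (((10 : ℤ) ^ 2 - 1) / 9) + 2 * (((10 : ℤ) ^ 3 - 1) / 9) := by
  classical
  refine ⟨?_, ?_, by norm_num⟩
  · have hset : {x : ℤ × ℤ × ℤ × ℤ × ℤ × ℕ × ℕ × ℕ |
        SumSol10 x.1 x.2.1 x.2.2.1 x.2.2.2.1 x.2.2.2.2.1
          x.2.2.2.2.2.1 x.2.2.2.2.2.2.1 x.2.2.2.2.2.2.2} = ↑solList.toFinset := by
      ext x
      rw [List.coe_toFinset]
      exact ⟨fun h => complete h, fun h => sound x h⟩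
    rw [hset, Set.ncard_coe_finset, List.toFinset_card_of_nodup sol_nodup, sol_length]
  · intro b ε₁ ε₂ d₁ d₂ l m n h
    exact sol_bounds _ (complete h)
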